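/- Let n ≥ 1, let O be a real orthogonal n×n matrix, W_r a real n×n matrix, W_in a real n×m matrix, ρ, ω real numbers, β ∈ (0,1], and set σ = ‖ρ·W_r‖ (operator norm induced by the Euclidean norm). Assume σ < 1. Let u : ℕ → ℝ^m be any input sequence, and let x, x' : ℕ → ℝ^n be two state trajectories satisfying the ES²N update x[t] = β·tanh(ρ·W_r·x[t−1] + ω·W_in·u[t]) + (1−β)·O·x[t−1] (and likewise for x') with arbitrary initial conditions x[0], x'[0]. Then for every T ≥ 0, ‖x[T] − x'[T]‖ ≤ (1 − β(1−σ))^T · ‖x[0] − x'[0]‖; in particular, ‖x[T] − x'[T]‖ → 0 as T → ∞ (the echo state property holds for all inputs). -/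

import Mathlib

open Matrix Filter

open scoped NNReal ENNReal

/-!
One ES²N step is a convex combination, with weights `β` and `1 - β`, of a `σ`-Lipschitz map (a
linear map of norm `σ`, a translation by the input, the 1-Lipschitz function `tanh` in every
coordinate) and the isometry `O`. It is therefore Lipschitz with constant
`β * σ + (1 - β) = 1 - β * (1 - σ) < 1`, whatever the input, so two trajectories driven by the same
input approach each other geometrically.
-/

theorem hasDerivAt_tanh (x : ℝ) : HasDerivAt Real.tanh (1 / Real.cosh x ^ 2) x := by
  have hquot := (Real.hasDerivAt_sinh x).div (Real.hasDerivAt_cosh x) (Real.cosh_pos x).ne'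
  rw [← sq, ← sq, Real.cosh_sq_sub_sinh_sq] at hquot
  exact hquot.congr_of_eventuallyEq (.of_forall Real.tanh_eq_sinh_div_cosh)

theorem lipschitzWith_tanh : LipschitzWith 1 Real.tanh := by
  refine lipschitzWith_of_nnnorm_deriv_le (fun x ↦ (hasDerivAt_tanh x).differentiableAt) fun x ↦ ?_
  rw [(hasDerivAt_tanh x).deriv, ← NNReal.coe_le_coe, coe_nnnorm, NNReal.coe_one,
    Real.norm_of_nonneg (by positivity)]
  exact div_le_one_of_le₀ (one_le_pow₀ (Real.one_le_cosh x)) (by positivity)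

section Layer

variable {ι : Type*} [Fintype ι] {p : ℝ≥0∞} [Fact (1 ≤ p)]

theorem lipschitzWith_withLpMap_piMap {α β : ι → Type*} [∀ i, PseudoEMetricSpace (α i)]
    [∀ i, PseudoEMetricSpace (β i)] {K : ℝ≥0} {f : ∀ i, α i → β i}
    (hf : ∀ i, LipschitzWith K (f i)) :
    LipschitzWith K (WithLp.map p (Pi.map f) : PiLp p α → PiLp p β) := by
  intro x y
  rcases p.dichotomy with rfl | hp
  · simp only [PiLp.edist_eq_iSup, ENNReal.mul_iSup]
    exact iSup_mono fun i ↦ hf i (x i) (y i)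
  · have hp0 : 0 < p.toReal := one_pos.trans_le hp
    rw [PiLp.edist_eq_sum hp0, PiLp.edist_eq_sum hp0, one_div, ENNReal.rpow_inv_le_iff hp0,
      ENNReal.mul_rpow_of_nonneg _ _ hp0.le, ENNReal.rpow_inv_rpow hp0.ne', Finset.mul_sum]
    refine Finset.sum_le_sum fun i _ ↦ ?_
    rw [← ENNReal.mul_rpow_of_nonneg _ _ hp0.le]
    exact ENNReal.rpow_le_rpow (hf i (x i) (y i)) hp0.le

variable {E : Type*} [SeminormedAddCommGroup E] [NormedSpace ℝ E]

/-- The layer of a neural network with weights `W`, bias `b` and activation function `tanh`, as a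
map into `ℝ^ι` with the `ℓ^p` norm. In a reservoir the bias is the current input term. -/
noncomputable def tanhLayer (W : E →L[ℝ] PiLp p fun _ : ι ↦ ℝ) (b : PiLp p fun _ : ι ↦ ℝ) (v : E) :
    PiLp p fun _ : ι ↦ ℝ :=
  WithLp.map p (Pi.map fun _ ↦ Real.tanh) (W v + b)

theorem lipschitzWith_tanhLayer (W : E →L[ℝ] PiLp p fun _ : ι ↦ ℝ) (b : PiLp p fun _ : ι ↦ ℝ) :
    LipschitzWith ‖W‖₊ (tanhLayer W b) := by
  have htanh : LipschitzWith 1 (WithLp.map p (Pi.map fun _ : ι ↦ Real.tanh)) :=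
    lipschitzWith_withLpMap_piMap fun _ ↦ lipschitzWith_tanh
  have haffine : LipschitzWith ‖W‖₊ fun v ↦ W v + b := by
    simpa only [add_zero] using W.lipschitz.add (LipschitzWith.const b)
  exact one_mul ‖W‖₊ ▸ htanh.comp haffine

end Layer

theorem isometry_toEuclideanCLM {𝕜 ι : Type*} [RCLike 𝕜] [Fintype ι] [DecidableEq ι]
    {U : Matrix ι ι 𝕜} (hU : Uᴴ * U = 1) : Isometry (toEuclideanCLM (𝕜 := 𝕜) U) := by
  rw [AddMonoidHomClass.isometry_iff_norm, ContinuousLinearMap.norm_map_iff_adjoint_comp_self,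
    ← ContinuousLinearMap.star_eq_adjoint, ← ContinuousLinearMap.mul_def, ← map_star, ← map_mul,
    star_eq_conjTranspose, hU, map_one]

theorem tendsto_zero_of_succ_le_mul {d : ℕ → ℝ} {q : ℝ} (hd : ∀ t, 0 ≤ d t) (hq0 : 0 ≤ q)
    (hq1 : q < 1) (hstep : ∀ t, d (t + 1) ≤ q * d t) : Tendsto d atTop (nhds 0) := by
  refine squeeze_zero hd (fun t ↦ le_geom hq0 t fun k _ ↦ hstep k) ?_
  simpa only [zero_mul] using (tendsto_pow_atTop_nhds_zero_of_lt_one hq0 hq1).mul_const (d 0)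

section Contraction

variable {E : Type*} [SeminormedAddCommGroup E] [NormedSpace ℝ E] {β : ℝ}

theorem dist_convexCombination_le {α : Type*} [PseudoMetricSpace α] {K L : ℝ≥0} {f g : α → E}
    (hf : LipschitzWith K f) (hg : LipschitzWith L g) (hβ : β ∈ Set.Icc (0 : ℝ) 1) (a b : α) :
    dist (β • f a + (1 - β) • g a) (β • f b + (1 - β) • g b) ≤
      (β * K + (1 - β) * L) * dist a b := by
  have hβ0 : 0 ≤ β := hβ.1
  have hβ1 : 0 ≤ 1 - β := sub_nonneg.2 hβ.2
  calc dist (β • f a + (1 - β) • g a) (β • f b + (1 - β) • g b)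
      ≤ dist (β • f a) (β • f b) + dist ((1 - β) • g a) ((1 - β) • g b) := dist_add_add_le _ _ _ _
    _ = β * dist (f a) (f b) + (1 - β) * dist (g a) (g b) := by
      rw [dist_smul₀, dist_smul₀, Real.norm_of_nonneg hβ0, Real.norm_of_nonneg hβ1]
    _ ≤ β * (K * dist a b) + (1 - β) * (L * dist a b) := by
      gcongr
      exacts [hf.dist_le_mul a b, hg.dist_le_mul a b]
    _ = (β * K + (1 - β) * L) * dist a b := by ring

/-- `F t` plays the role of the `tanh` term, with the input at time `t + 1` built in, and `R t` that
of the orthogonal map `O`. -/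
theorem es2n_echo_state_property_general (hβ : β ∈ Set.Ioc (0 : ℝ) 1) {σ : ℝ≥0} (hσ : σ < 1)
    {F R : ℕ → E → E} (hF : ∀ t, LipschitzWith σ (F t)) (hR : ∀ t, LipschitzWith 1 (R t))
    {x x' : ℕ → E} (hx : ∀ t, x (t + 1) = β • F t (x t) + (1 - β) • R t (x t))
    (hx' : ∀ t, x' (t + 1) = β • F t (x' t) + (1 - β) • R t (x' t)) :
    (∀ T : ℕ, ‖x T - x' T‖ ≤ (1 - β * (1 - σ)) ^ T * ‖x 0 - x' 0‖) ∧
      Tendsto (fun T : ℕ ↦ ‖x T - x' T‖) atTop (nhds 0) := by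
  have hσ1 : (0 : ℝ) < 1 - σ := sub_pos.2 hσ
  have hrate0 : 0 ≤ 1 - β * (1 - σ) :=
    sub_nonneg.2 (mul_le_one₀ hβ.2 hσ1.le (sub_le_self 1 σ.coe_nonneg))
  have hrate1 : 1 - β * (1 - σ) < 1 := sub_lt_self 1 (mul_pos hβ.1 hσ1)
  have hstep (t : ℕ) : ‖x (t + 1) - x' (t + 1)‖ ≤ (1 - β * (1 - σ)) * ‖x t - x' t‖ := by
    have hrate : 1 - β * (1 - σ) = β * σ + (1 - β) * (1 : ℝ≥0) := by push_cast; ring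
    rw [hrate, hx, hx', ← dist_eq_norm, ← dist_eq_norm]
    exact dist_convexCombination_le (hF t) (hR t) (Set.Ioc_subset_Icc_self hβ) (x t) (x' t)
  exact ⟨fun T ↦ le_geom (u := fun t ↦ ‖x t - x' t‖) hrate0 T fun t _ ↦ hstep t,
    tendsto_zero_of_succ_le_mul (fun _ ↦ norm_nonneg _) hrate0 hrate1 hstep⟩

end Contraction

/-- Echo state property of the ES²N: if `σ = ‖ρ·W_r‖ < 1`, then any two trajectories driven by
the same input sequence contract at rate `1 − β(1−σ)` and hence synchronize. -/
theorem es2n_echo_state_property {n m : ℕ} (hn : 1 ≤ n)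
    (O Wr : Matrix (Fin n) (Fin n) ℝ) (hO : Oᵀ * O = 1)
    (Win : Matrix (Fin n) (Fin m) ℝ) (ρ ω β σ : ℝ) (hβ : β ∈ Set.Ioc (0 : ℝ) 1)
    (hσ : σ = ‖Matrix.toEuclideanCLM (𝕜 := ℝ) (ρ • Wr)‖) (hσ1 : σ < 1)
    (u : ℕ → EuclideanSpace ℝ (Fin m)) (x x' : ℕ → EuclideanSpace ℝ (Fin n))
    (hx : ∀ (t : ℕ) (i : Fin n),
      x (t + 1) i = β * Real.tanh ((ρ • Wr).mulVec (x t) i + (ω • Win).mulVec (u (t + 1)) i)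
        + (1 - β) * O.mulVec (x t) i)
    (hx' : ∀ (t : ℕ) (i : Fin n),
      x' (t + 1) i = β * Real.tanh ((ρ • Wr).mulVec (x' t) i + (ω • Win).mulVec (u (t + 1)) i)
        + (1 - β) * O.mulVec (x' t) i) :
    (∀ T : ℕ, ‖x T - x' T‖ ≤ (1 - β * (1 - σ)) ^ T * ‖x 0 - x' 0‖) ∧
      Tendsto (fun T : ℕ => ‖x T - x' T‖) atTop (nhds 0) := by
  subst hσ
  exact es2n_echo_state_property_general hβ (σ := ‖toEuclideanCLM (𝕜 := ℝ) (ρ • Wr)‖₊) hσ1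
    (fun t ↦ lipschitzWith_tanhLayer _ (WithLp.toLp 2 ((ω • Win) *ᵥ u (t + 1))))
    (fun _ ↦ (isometry_toEuclideanCLM (𝕜 := ℝ) hO).lipschitz)
    (fun t ↦ PiLp.ext (hx t)) (fun t ↦ PiLp.ext (hx' t))
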